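/- In a convex polygon with vertices a₁, …, aₙ in clockwise order and distinct distances d₁ > d₂ > ⋯, if a, b, c, d are vertices in clockwise order with dist(b,c) ≥ d_k and dist(a,d) ≥ d_k, then either there are at most 2k − 3 vertices strictly between a and b, or at most 2k − 3 vertices strictly between c and d. -/

import Mathlib

/-!
A convex quadrilateral `a b c e` cannot have four acute corners, and at a corner that is not acute,
moving to the adjacent polygon vertex on the arc `ab` or `ce` strictly increases the distance to the
opposite end of `bc` or `ae`. Hence as long as vertices remain on both arcs, one of the distances
`bc`, `ae` can be made larger at the cost of a single step along a single arc. Each such move uses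
up one of the distances exceeding `bc` or `ae`, of which there are at most `i - 1` and `j - 1` when
`dist b c ≥ d i` and `dist a e ≥ d j`.
-/

/-- The cross product (signed area determinant) of two vectors in the Euclidean plane. -/
noncomputable def cross2 (u v : EuclideanSpace ℝ (Fin 2)) : ℝ := u 0 * v 1 - u 1 * v 0

/-- The vertices `P 0, P 1, …` form a convex polygon listed in clockwise order. -/
def ClockwiseConvexPos {n : ℕ} (P : Fin n → EuclideanSpace ℝ (Fin 2)) : Prop :=
  ∀ i j k : Fin n, i < j → j < k → cross2 (P j - P i) (P k - P i) < 0

section InnerProduct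

variable {V X : Type*} [NormedAddCommGroup V] [InnerProductSpace ℝ V] [MetricSpace X]
  [NormedAddTorsor V X]

theorem dist_lt_dist_of_inner_vsub_nonpos {x x' y : X} (hne : x' ≠ x)
    (h : inner ℝ (x' -ᵥ x) (y -ᵥ x) ≤ 0) : dist x y < dist x' y := by
  have hpos : 0 < ‖x' -ᵥ x‖ ^ 2 := by
    have := norm_pos_iff.2 (vsub_ne_zero.2 hne)
    positivity
  have hcos := norm_sub_sq_real (x' -ᵥ x) (y -ᵥ x)
  rw [vsub_sub_vsub_cancel_right] at hcos
  rw [dist_comm x y, dist_eq_norm_vsub V y x, dist_eq_norm_vsub V x' y]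
  exact lt_of_pow_lt_pow_left₀ 2 (norm_nonneg _) (by linarith)

end InnerProduct

theorem cross2_swap (u v : EuclideanSpace ℝ (Fin 2)) : cross2 u v = -cross2 v u := by
  simp only [cross2]
  ring

theorem cross2_sub_sub_rotate (x y z : EuclideanSpace ℝ (Fin 2)) :
    cross2 (y - x) (z - x) = cross2 (z - y) (x - y) := by
  simp only [cross2, PiLp.sub_apply]
  ring

theorem cross2_sub_sub_right (x y z : EuclideanSpace ℝ (Fin 2)) :
    cross2 (y - x) (z - y) = cross2 (y - x) (z - x) := by
  simp only [cross2, PiLp.sub_apply]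
  ring

theorem cross2_mul_inner_sub_cross2_mul_inner (u v w : EuclideanSpace ℝ (Fin 2)) :
    cross2 u v * inner ℝ w v - cross2 w v * inner ℝ u v = cross2 u w * ‖v‖ ^ 2 := by
  simp only [cross2, EuclideanSpace.real_norm_sq_eq, PiLp.inner_apply, RCLike.inner_apply,
    conj_trivial, Fin.sum_univ_two]
  ring

/-- The two sign conditions say, for either orientation, that `w` lies in the angle from `u` to
`v`. -/
theorem inner_nonpos_of_inner_nonpos_of_between {u v w : EuclideanSpace ℝ (Fin 2)}
    (hside : 0 < cross2 u v * cross2 w v) (hbetween : 0 ≤ cross2 u v * cross2 u w)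
    (h : inner ℝ w v ≤ 0) : inner ℝ u v ≤ 0 := by
  have hident : cross2 u v * cross2 w v * inner ℝ u v
      = cross2 u v ^ 2 * inner ℝ w v - cross2 u v * cross2 u w * ‖v‖ ^ 2 := by
    linear_combination -cross2 u v * cross2_mul_inner_sub_cross2_mul_inner u v w
  have hfirst := mul_nonpos_of_nonneg_of_nonpos (sq_nonneg (cross2 u v)) h
  have hsecond := mul_nonneg hbetween (sq_nonneg ‖v‖)
  exact nonpos_of_mul_nonpos_right (by linarith) hside

theorem dist_lt_dist_of_between_of_inner_nonpos {x x' y z : EuclideanSpace ℝ (Fin 2)}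
    (hside : 0 < cross2 (x' - x) (y - x) * cross2 (z - x) (y - x))
    (hbetween : 0 ≤ cross2 (x' - x) (y - x) * cross2 (x' - x) (z - x))
    (h : inner ℝ (z - x) (y - x) ≤ 0) : dist x y < dist x' y := by
  refine dist_lt_dist_of_inner_vsub_nonpos ?_
    (inner_nonpos_of_inner_nonpos_of_between hside hbetween h)
  rintro rfl
  simp [cross2] at hside

/-- Two right turns, each by more than a right angle, add up to more than a half-turn. -/
theorem cross2_pos_of_cross2_neg_of_inner_neg {u v w : EuclideanSpace ℝ (Fin 2)}
    (huv : cross2 u v < 0) (hvw : cross2 v w < 0) (huv' : inner ℝ u v < 0)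
    (hvw' : inner ℝ v w < 0) : 0 < cross2 u w := by
  have hident : cross2 u v * inner ℝ v w + cross2 v w * inner ℝ u v = cross2 u w * ‖v‖ ^ 2 := by
    rw [← cross2_mul_inner_sub_cross2_mul_inner u v w, cross2_swap w v, real_inner_comm v w]
    ring
  have hfirst := mul_pos_of_neg_of_neg huv hvw'
  have hsecond := mul_pos_of_neg_of_neg hvw huv'
  exact pos_of_mul_pos_left (by linarith) (sq_nonneg ‖v‖)

theorem not_all_corners_acute_of_clockwise {a b c e : EuclideanSpace ℝ (Fin 2)}
    (habc : cross2 (b - a) (c - a) < 0) (hbce : cross2 (c - b) (e - b) < 0)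
    (hcea : cross2 (e - c) (a - c) < 0) (heab : cross2 (a - e) (b - e) < 0) :
    inner ℝ (e - a) (b - a) ≤ 0 ∨ inner ℝ (a - b) (c - b) ≤ 0 ∨
      inner ℝ (b - c) (e - c) ≤ 0 ∨ inner ℝ (c - e) (a - e) ≤ 0 := by
  by_contra! hacute
  obtain ⟨ha, hb, hc, he⟩ := hacute
  have hturn : ∀ {x y z : EuclideanSpace ℝ (Fin 2)}, 0 < inner ℝ (x - y) (z - y) →
      inner ℝ (y - x) (z - y) < 0 := by
    intro x y z h
    rwa [← neg_sub y x, inner_neg_left, neg_pos] at h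
  rw [← cross2_sub_sub_right] at habc hbce hcea heab
  have hpos := cross2_pos_of_cross2_neg_of_inner_neg habc hbce (hturn hb) (hturn hc)
  have hneg := cross2_pos_of_cross2_neg_of_inner_neg hcea heab (hturn he) (hturn ha)
  rw [cross2_swap] at hneg
  linarith

section LargerDistances

variable {ι X : Type*} [Fintype ι] [PseudoMetricSpace X]

/-- The finite set of distances between points of the family `P` that exceed `r`. Its cardinality
measures how far down `r` is in the list of distances: it is less than `k` when `r` is at least the
`k`-th largest distance. -/
noncomputable def largerDistances (P : ι → X) (r : ℝ) : Finset ℝ :=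
  {s ∈ Finset.univ.image fun p : ι × ι => dist (P p.1) (P p.2) | r < s}

theorem mem_largerDistances {P : ι → X} {r s : ℝ} :
    s ∈ largerDistances P r ↔ (∃ u v, dist (P u) (P v) = s) ∧ r < s := by
  simp [largerDistances]

theorem card_largerDistances_lt_card {P : ι → X} {r : ℝ} {u v : ι} (h : r < dist (P u) (P v)) :
    (largerDistances P (dist (P u) (P v))).card < (largerDistances P r).card := by
  refine Finset.card_lt_card (Finset.ssubset_iff_of_subset ?_ |>.2
    ⟨dist (P u) (P v), mem_largerDistances.2 ⟨⟨u, v, rfl⟩, h⟩, ?_⟩)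
  · intro s hs
    obtain ⟨hdist, hlt⟩ := mem_largerDistances.1 hs
    exact mem_largerDistances.2 ⟨hdist, h.trans hlt⟩
  · exact fun hmem => lt_irrefl _ (mem_largerDistances.1 hmem).2

theorem card_largerDistances_lt {P : ι → X} {d : ℕ → ℝ} {N : ℕ}
    (hanti : AntitoneOn d (Set.Icc 1 N))
    (himg : d '' Set.Icc 1 N = {r : ℝ | ∃ u v, u ≠ v ∧ dist (P u) (P v) = r})
    {k : ℕ} (hk : k ∈ Set.Icc 1 N) {r : ℝ} (hr : d k ≤ r) :
    (largerDistances P r).card < k := by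
  have hnonneg : 0 ≤ d k := by
    obtain ⟨u, v, -, huv⟩ := himg.subset (Set.mem_image_of_mem d hk)
    exact huv ▸ dist_nonneg
  have hsub : largerDistances P r ⊆ (Finset.Ico 1 k).image d := by
    intro s hs
    obtain ⟨⟨u, v, rfl⟩, hlt⟩ := mem_largerDistances.1 hs
    have huv : u ≠ v := by
      rintro rfl
      rw [dist_self] at hlt
      linarith
    obtain ⟨m, hm, hdm⟩ := himg.superset ⟨u, v, huv, rfl⟩
    have hmk : m < k := hanti.reflect_lt hk hm (by linarith)
    exact Finset.mem_image.2 ⟨m, Finset.mem_Ico.2 ⟨hm.1, hmk⟩, hdm⟩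
  calc (largerDistances P r).card ≤ ((Finset.Ico 1 k).image d).card := Finset.card_le_card hsub
    _ ≤ (Finset.Ico 1 k).card := Finset.card_image_le
    _ < k := by rw [Nat.card_Ico]; exact Nat.sub_lt hk.1 one_pos

end LargerDistances

namespace ClockwiseConvexPos

variable {n : ℕ} {P : Fin n → EuclideanSpace ℝ (Fin 2)}

theorem cross2_middle_neg (hP : ClockwiseConvexPos P) {i j k : Fin n} (hij : i < j) (hjk : j < k) :
    cross2 (P k - P j) (P i - P j) < 0 := by
  rw [← cross2_sub_sub_rotate]
  exact hP i j k hij hjk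

theorem cross2_middle_pos (hP : ClockwiseConvexPos P) {i j k : Fin n} (hij : i < j) (hjk : j < k) :
    0 < cross2 (P i - P j) (P k - P j) := by
  rw [cross2_swap]
  exact neg_pos.2 (hP.cross2_middle_neg hij hjk)

theorem cross2_right_pos (hP : ClockwiseConvexPos P) {i j k : Fin n} (hij : i < j) (hjk : j < k) :
    0 < cross2 (P j - P k) (P i - P k) := by
  rw [cross2_swap, cross2_sub_sub_rotate]
  exact neg_pos.2 (hP i j k hij hjk)

theorem cross2_left_nonpos (hP : ClockwiseConvexPos P) {i j k : Fin n} (hij : i ≤ j)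
    (hjk : j ≤ k) : cross2 (P j - P i) (P k - P i) ≤ 0 := by
  rcases hij.eq_or_lt with rfl | hij
  · simp [cross2]
  rcases hjk.eq_or_lt with rfl | hjk
  · simp [cross2, mul_comm]
  exact (hP i j k hij hjk).le

theorem cross2_right_nonneg (hP : ClockwiseConvexPos P) {i j k : Fin n} (hij : i ≤ j)
    (hjk : j ≤ k) : 0 ≤ cross2 (P j - P k) (P i - P k) := by
  rw [cross2_swap, cross2_sub_sub_rotate]
  exact neg_nonneg.2 (hP.cross2_left_nonpos hij hjk)

theorem injective (hP : ClockwiseConvexPos P) (hn : 2 < n) : Function.Injective P := by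
  refine Function.Injective.of_lt_imp_ne fun u v huv heq => ?_
  obtain ⟨w, hwu, hwv⟩ := Fin.exists_ne_and_ne_of_two_lt u v hn
  rcases lt_or_gt_of_ne hwu with hwu | huw
  · have := hP w u v hwu huv
    simp [cross2, heq, mul_comm] at this
  rcases lt_or_gt_of_ne hwv with hwv | hvw
  · have := hP u w v huw hwv
    simp [cross2, heq] at this
  · have := hP u v w huv hvw
    simp [cross2, heq] at this

theorem not_all_corners_acute (hP : ClockwiseConvexPos P) {a b c e : Fin n} (hab : a < b)
    (hbc : b < c) (hce : c < e) :
    inner ℝ (P e - P a) (P b - P a) ≤ 0 ∨ inner ℝ (P a - P b) (P c - P b) ≤ 0 ∨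
      inner ℝ (P b - P c) (P e - P c) ≤ 0 ∨ inner ℝ (P c - P e) (P a - P e) ≤ 0 := by
  refine not_all_corners_acute_of_clockwise (hP a b c hab hbc) (hP b c e hbc hce) ?_ ?_
  · rw [← cross2_sub_sub_rotate]
    exact hP a c e (hab.trans hbc) hce
  · rw [cross2_sub_sub_rotate]
    exact hP a b e hab (hbc.trans hce)

theorem some_inward_move_increases_dist (hP : ClockwiseConvexPos P) {a a' b b' c c' e e' : Fin n}
    (haa' : a < a') (ha'b : a' ≤ b) (hab' : a ≤ b') (hb'b : b' < b) (hbc : b < c)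
    (hcc' : c < c') (hc'e : c' ≤ e) (hce' : c ≤ e') (he'e : e' < e) :
    dist (P a) (P e) < dist (P a') (P e) ∨ dist (P b) (P c) < dist (P b') (P c) ∨
      dist (P b) (P c) < dist (P b) (P c') ∨ dist (P a) (P e) < dist (P a) (P e') := by
  have hab := haa'.trans_le ha'b
  have hce := hcc'.trans_le hc'e
  rcases hP.not_all_corners_acute hab hbc hce with ha | hb | hc | he
  · left
    have hneg := hP a a' e haa' (ha'b.trans_lt (hbc.trans hce))
    rw [real_inner_comm] at ha
    exact dist_lt_dist_of_between_of_inner_nonpos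
      (mul_pos_of_neg_of_neg hneg (hP a b e hab (hbc.trans hce)))
      (mul_nonneg_of_nonpos_of_nonpos hneg.le (hP.cross2_left_nonpos haa'.le ha'b)) ha
  · right; left
    have hpos := hP.cross2_middle_pos hb'b hbc
    exact dist_lt_dist_of_between_of_inner_nonpos
      (mul_pos hpos (hP.cross2_middle_pos hab hbc))
      (mul_nonneg hpos.le (hP.cross2_right_nonneg hab' hb'b.le)) hb
  · right; right; left
    rw [dist_comm (P b), dist_comm (P b)]
    have hneg := hP.cross2_middle_neg hbc hcc'
    rw [real_inner_comm] at hc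
    exact dist_lt_dist_of_between_of_inner_nonpos
      (mul_pos_of_neg_of_neg hneg (hP.cross2_middle_neg hbc hce))
      (mul_nonneg_of_nonpos_of_nonpos hneg.le (hP.cross2_left_nonpos hcc'.le hc'e)) hc
  · right; right; right
    rw [dist_comm (P a), dist_comm (P a)]
    have hpos := hP.cross2_right_pos (hab.trans (hbc.trans_le hce')) he'e
    exact dist_lt_dist_of_between_of_inner_nonpos
      (mul_pos hpos (hP.cross2_right_pos (hab.trans hbc) hce))
      (mul_nonneg hpos.le (hP.cross2_right_nonneg hce' he'e.le)) he

theorem min_sub_le_card_largerDistances_add (hP : ClockwiseConvexPos P) {a b c e : Fin n}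
    (hbc : b < c) :
    min ((b : ℕ) - a) (e - c) ≤ (largerDistances P (dist (P b) (P c))).card +
      (largerDistances P (dist (P a) (P e))).card := by
  induction hm : (largerDistances P (dist (P b) (P c))).card +
      (largerDistances P (dist (P a) (P e))).card using Nat.strong_induction_on
    generalizing a b c e with
  | _ m ih =>
  by_contra! h
  obtain ⟨hab, hce⟩ := lt_min_iff.1 h
  obtain ⟨a', ha'⟩ : ∃ a' : Fin n, a'.val = a + 1 := ⟨⟨a + 1, by omega⟩, rfl⟩
  obtain ⟨b', hb'⟩ : ∃ b' : Fin n, b'.val + 1 = b := ⟨⟨b - 1, by omega⟩, by grind⟩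
  obtain ⟨c', hc'⟩ : ∃ c' : Fin n, c'.val = c + 1 := ⟨⟨c + 1, by omega⟩, rfl⟩
  obtain ⟨e', he'⟩ : ∃ e' : Fin n, e'.val + 1 = e := ⟨⟨e - 1, by omega⟩, by grind⟩
  rcases hP.some_inward_move_increases_dist (show a < a' by omega) (show a' ≤ b by omega)
      (show a ≤ b' by omega) (show b' < b by omega) hbc (show c < c' by omega)
      (show c' ≤ e by omega) (show c ≤ e' by omega) (show e' < e by omega)
    with hlt | hlt | hlt | hlt
  all_goals have hcard := card_largerDistances_lt_card hlt
  · have := ih _ (by omega) hbc (a := a') (e := e) rfl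
    omega
  · have := ih _ (by omega) (show b' < c by omega) (a := a) (e := e) rfl
    omega
  · have := ih _ (by omega) (show b < c' by omega) (a := a) (e := e) rfl
    omega
  · have := ih _ (by omega) hbc (a := a) (e := e') rfl
    omega

end ClockwiseConvexPos

theorem stmt14_general {n : ℕ} (P : Fin n → EuclideanSpace ℝ (Fin 2)) (hP : ClockwiseConvexPos P)
    (d : ℕ → ℝ) (N : ℕ) (hanti : StrictAntiOn d (Set.Icc 1 N))
    (himg : d '' Set.Icc 1 N = {r : ℝ | ∃ u v : Fin n, u ≠ v ∧ dist (P u) (P v) = r})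
    (i j : ℕ) (hi : i ∈ Set.Icc 1 N) (hj : j ∈ Set.Icc 1 N)
    (a b c e : Fin n) (hbc : b ≤ c)
    (hbcdist : d i ≤ dist (P b) (P c)) (haedist : d j ≤ dist (P a) (P e)) :
    ((b.val : ℤ) - a.val - 1 ≤ (i : ℤ) + j - 3) ∨ ((e.val : ℤ) - c.val - 1 ≤ (i : ℤ) + j - 3) := by
  by_contra! h
  have hbc' : b < c := by
    refine hbc.lt_of_ne ?_
    rintro rfl
    obtain ⟨u, v, huv, hdist⟩ := himg.subset (Set.mem_image_of_mem d hi)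
    have hn : 2 < n := by
      have := hi.1
      have := hj.1
      omega
    rw [dist_self, ← hdist] at hbcdist
    exact (dist_pos.2 ((hP.injective hn).ne huv)).not_ge hbcdist
  have hcardi := card_largerDistances_lt hanti.antitoneOn himg hi hbcdist
  have hcardj := card_largerDistances_lt hanti.antitoneOn himg hj haedist
  have hgap := hP.min_sub_le_card_largerDistances_add (a := a) (e := e) hbc'
  omega

/-- Case `i = j = k` of Fact 3: if `a, b, c, d` are vertices in clockwise order
(possibly `b = c`) with `dist b c ≥ d k` and `dist a d ≥ d k`, then there are at most
`2k - 3` vertices strictly between `a` and `b`, or at most `2k - 3` strictly between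
`c` and `d` (inequalities over ℤ). -/
theorem stmt14 {n : ℕ} (P : Fin n → EuclideanSpace ℝ (Fin 2)) (hP : ClockwiseConvexPos P)
    (d : ℕ → ℝ) (N : ℕ) (hanti : StrictAntiOn d (Set.Icc 1 N))
    (himg : d '' Set.Icc 1 N = {r : ℝ | ∃ u v : Fin n, u ≠ v ∧ dist (P u) (P v) = r})
    (k : ℕ) (hk : k ∈ Set.Icc 1 N)
    (a b c dd : Fin n) (hab : a < b) (hbc : b ≤ c) (hcd : c < dd)
    (hbcdist : d k ≤ dist (P b) (P c)) (haddist : d k ≤ dist (P a) (P dd)) :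
    ((b.val : ℤ) - a.val - 1 ≤ 2 * (k : ℤ) - 3) ∨
    ((dd.val : ℤ) - c.val - 1 ≤ 2 * (k : ℤ) - 3) := by
  have h := stmt14_general P hP d N hanti himg k k hk hk a b c dd hbc hbcdist haddist
  omega
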